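/- arXiv:1010.3492 — 4 statements merged into one kernel-verified Lean document; each statement's English description precedes it below -/
import Mathlib

section
/- Let a₁, a₂, a₃ be real parameters and let Λ be the 2×2 matrix with entries Λ₁₁ = a₁cos²φ + a₂sin²φ, Λ₁₂ = ((a₁−a₂)/2) sin 2φ · (cos θ/sin θ), Λ₂₁ = ((a₁−a₂)/2) sin 2φ · cos θ sin θ, Λ₂₂ = a₃ sin²θ + (a₁ sin²φ + a₂ cos²φ) cos²θ. Define the bivector π′ on the open set where sin θ ≠ 0 by {φ,θ}_{π′} = 0, {q_i, p_j}_{π′} = Λ_{ij} (where (q₁,q₂,p₁,p₂) = (φ,θ,p_φ,p_θ)), and {p_φ, p_θ}_{π′} = (∂Λ₁₁/∂θ − ∂Λ₁₂/∂φ) p_φ + (∂Λ₂₁/∂θ − ∂Λ₂₂/∂φ) p_θ. Then π′ is a Poisson bivector and is compatible with the canonical bivector P, i.e. π′ and P + π′ both satisfy the Jacobi identity. -/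
open Real

/-- Partial derivative in the `i`-th coordinate direction on `ℝ⁴`
(coordinates `z 0 = φ`, `z 1 = θ`, `z 2 = p_φ`, `z 3 = p_θ`). -/
noncomputable def pd (i : Fin 4) (F : (Fin 4 → ℝ) → ℝ) (z : Fin 4 → ℝ) : ℝ :=
  fderiv ℝ F z (Pi.single i 1)

/-- The Poisson bracket of `F` and `G` defined by a bivector `π`. -/
noncomputable def pbiv (Pv : (Fin 4 → ℝ) → Matrix (Fin 4) (Fin 4) ℝ)
    (F G : (Fin 4 → ℝ) → ℝ) (z : Fin 4 → ℝ) : ℝ :=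
  ∑ i : Fin 4, ∑ j : Fin 4, Pv z i j * pd i F z * pd j G z

/-- A bivector `π` satisfies the Jacobi identity (is a Poisson bivector) on `U`. -/
def IsPoissonOn (Pv : (Fin 4 → ℝ) → Matrix (Fin 4) (Fin 4) ℝ)
    (U : Set (Fin 4 → ℝ)) : Prop :=
  ∀ z ∈ U, ∀ i j k : Fin 4,
    (∑ l : Fin 4, (Pv z l i * pd l (fun w => Pv w j k) z
      + Pv z l j * pd l (fun w => Pv w k i) z
      + Pv z l k * pd l (fun w => Pv w i j) z)) = 0

/-- The antisymmetric matrix with the given upper-triangular entries: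
`a = {φ,θ}`, `b = {φ,p_φ}`, `c = {φ,p_θ}`, `d = {θ,p_φ}`, `e = {θ,p_θ}`, `f = {p_φ,p_θ}`. -/
noncomputable def skew (a b c d e f : ℝ) : Matrix (Fin 4) (Fin 4) ℝ :=
  !![0, a, b, c; -a, 0, d, e; -b, -d, 0, f; -c, -e, -f, 0]

/-- The canonical Poisson bivector: `{φ,p_φ} = {θ,p_θ} = 1`, all other brackets zero. -/
noncomputable def Pcan : Matrix (Fin 4) (Fin 4) ℝ :=
  !![0, 0, 1, 0; 0, 0, 0, 1; -1, 0, 0, 0; 0, -1, 0, 0]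

noncomputable def L11 (a₁ a₂ : ℝ) (z : Fin 4 → ℝ) : ℝ :=
  a₁ * cos (z 0) ^ 2 + a₂ * sin (z 0) ^ 2

noncomputable def L12 (a₁ a₂ : ℝ) (z : Fin 4 → ℝ) : ℝ :=
  (a₁ - a₂) / 2 * sin (2 * z 0) * (cos (z 1) / sin (z 1))

noncomputable def L21 (a₁ a₂ : ℝ) (z : Fin 4 → ℝ) : ℝ :=
  (a₁ - a₂) / 2 * sin (2 * z 0) * (cos (z 1) * sin (z 1))

noncomputable def L22 (a₁ a₂ a₃ : ℝ) (z : Fin 4 → ℝ) : ℝ :=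
  a₃ * sin (z 1) ^ 2 + (a₁ * sin (z 0) ^ 2 + a₂ * cos (z 0) ^ 2) * cos (z 1) ^ 2

/-- The Poisson bivector `π′` of the Neumann system, determined by the potential
matrix `Λ`: `{φ,θ} = 0`, `{q_i,p_j} = Λ_{ij}`,
`{p_φ,p_θ} = (∂Λ₁₁/∂θ − ∂Λ₁₂/∂φ) p_φ + (∂Λ₂₁/∂θ − ∂Λ₂₂/∂φ) p_θ`. -/
noncomputable def piNeu (a₁ a₂ a₃ : ℝ) (z : Fin 4 → ℝ) : Matrix (Fin 4) (Fin 4) ℝ :=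
  skew 0 (L11 a₁ a₂ z) (L12 a₁ a₂ z) (L21 a₁ a₂ z) (L22 a₁ a₂ a₃ z)
    ((pd 1 (L11 a₁ a₂) z - pd 0 (L12 a₁ a₂) z) * z 2
      + (pd 1 (L21 a₁ a₂) z - pd 0 (L22 a₁ a₂ a₃) z) * z 3)

/-!
The bivector `π′` is assembled from a `(1,1)`-tensor field on configuration space: `Λ` is the matrix
of a field of operators `L` with `L ∂_k = ∑_j Λ_{jk} ∂_j`, and the bracket `{p_φ, p_θ}` is minus the
coefficient of `dφ ∧ dθ` in the differential, at fixed `p`, of the one-form `L* (p dq)`. For any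
such bivector the Jacobi identity says exactly that the Nijenhuis torsion of `L` vanishes. The
canonical bivector is the one attached to the identity operator, so `s P + π′` is attached to
`s + L`, whose torsion is that of `L`. Both claims therefore reduce to the vanishing of the torsion
of the Neumann tensor.
-/

section PartialDerivatives

variable {F : (Fin 4 → ℝ) → ℝ} {z : Fin 4 → ℝ}

lemma pd_const (i : Fin 4) (c : ℝ) (z : Fin 4 → ℝ) : pd i (fun _ => c) z = 0 := by
  simp [pd]

lemma pd_neg (i : Fin 4) (F : (Fin 4 → ℝ) → ℝ) (z : Fin 4 → ℝ) :
    pd i (fun w => -F w) z = -pd i F z := by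
  simp [pd, fderiv_fun_neg]

lemma pd_const_add (i : Fin 4) (c : ℝ) (F : (Fin 4 → ℝ) → ℝ) (z : Fin 4 → ℝ) :
    pd i (fun w => c + F w) z = pd i F z := by
  simp [pd, fderiv_const_add]

lemma pd_eq_of_hasDerivAt_update {i : Fin 4} {F' : ℝ} (hF : DifferentiableAt ℝ F z)
    (h : HasDerivAt (fun t => F (Function.update z i t)) F' (z i)) : pd i F z = F' := by
  have hF' : HasFDerivAt F (fderiv ℝ F z) (Function.update z i (z i)) := by
    simpa only [Function.update_eq_self] using hF.hasFDerivAt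
  exact (hF'.comp_hasDerivAt (z i) (hasDerivAt_update z i (z i))).unique h

lemma update_eq_of_dependsOn {β : Type*} {G : (Fin 4 → ℝ) → β} {s : Set (Fin 4)} {i : Fin 4}
    (hG : DependsOn G s) (hi : i ∉ s) (z : Fin 4 → ℝ) (t : ℝ) :
    G (Function.update z i t) = G z :=
  hG fun _ hj => Function.update_of_ne (ne_of_mem_of_not_mem hj hi) t z

lemma pd_eq_zero_of_dependsOn {s : Set (Fin 4)} {i : Fin 4} (hF : DependsOn F s) (hi : i ∉ s)
    (z : Fin 4 → ℝ) : pd i F z = 0 := by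
  by_cases hd : DifferentiableAt ℝ F z
  · refine pd_eq_of_hasDerivAt_update hd ?_
    simpa only [update_eq_of_dependsOn hF hi] using hasDerivAt_const (z i) (F z)
  · simp [pd, fderiv_zero_of_not_differentiableAt hd]

lemma dependsOn_pd {s : Set (Fin 4)} (hF : DependsOn F s) (i : Fin 4) : DependsOn (pd i F) s := by
  intro x y hxy
  have hshift : (fun w => F (w + (y - x))) = F := by
    funext w
    exact hF fun j hj => by simp [hxy j hj]
  have hfderiv : fderiv ℝ F x = fderiv ℝ F y := by
    simpa [hshift] using fderiv_comp_add_right (𝕜 := ℝ) (f := F) (x := x) (y - x)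
  simp only [pd, hfderiv]

lemma differentiableAt_pd (hF : ContDiffAt ℝ 2 F z) (i : Fin 4) : DifferentiableAt ℝ (pd i F) z :=
  ((hF.fderiv_right (m := 1) (by norm_num)).differentiableAt one_ne_zero).clm_apply
    (differentiableAt_const _)

end PartialDerivatives

section Jacobiator

open scoped Matrix

variable {Pv : (Fin 4 → ℝ) → Matrix (Fin 4) (Fin 4) ℝ}

/-- The Jacobiator of a bivector on the coordinate functions `z i`, `z j`, `z k`, normalized as in
`IsPoissonOn`. -/
noncomputable def jacobiator (Pv : (Fin 4 → ℝ) → Matrix (Fin 4) (Fin 4) ℝ) (i j k : Fin 4)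
    (z : Fin 4 → ℝ) : ℝ :=
  ∑ l, (Pv z l i * pd l (fun w => Pv w j k) z + Pv z l j * pd l (fun w => Pv w k i) z
    + Pv z l k * pd l (fun w => Pv w i j) z)

lemma jacobiator_rotate (Pv : (Fin 4 → ℝ) → Matrix (Fin 4) (Fin 4) ℝ) (i j k : Fin 4)
    (z : Fin 4 → ℝ) : jacobiator Pv j k i z = jacobiator Pv i j k z :=
  Finset.sum_congr rfl fun _ _ => by ring

lemma jacobiator_swap (hskew : ∀ w, (Pv w)ᵀ = -Pv w) (i j k : Fin 4) (z : Fin 4 → ℝ) :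
    jacobiator Pv j i k z = -jacobiator Pv i j k z := by
  have hpd (l m n : Fin 4) : pd l (fun w => Pv w m n) z = -pd l (fun w => Pv w n m) z := by
    rw [← pd_neg]
    exact congrArg (pd l · z) (funext fun w => congrFun₂ (hskew w) n m)
  simp only [jacobiator, ← Finset.sum_neg_distrib]
  refine Finset.sum_congr rfl fun l _ => ?_
  rw [hpd l i k, hpd l k j, hpd l j i]
  ring

lemma isPoissonOn_of_lt {U : Set (Fin 4 → ℝ)} (hskew : ∀ w, (Pv w)ᵀ = -Pv w)
    (h : ∀ z ∈ U, ∀ i j k, i < j → j < k → jacobiator Pv i j k z = 0) : IsPoissonOn Pv U := by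
  intro z hz i j k
  change jacobiator Pv i j k z = 0
  have hrot := fun i j k => jacobiator_rotate Pv i j k z
  have hswap := fun i j k => jacobiator_swap hskew i j k z
  have hdiag (i k : Fin 4) : jacobiator Pv i i k z = 0 := self_eq_neg.mp (hswap i i k)
  specialize h z hz
  rcases lt_trichotomy i j with hij | hij | hij <;>
    rcases lt_trichotomy j k with hjk | hjk | hjk <;>
    rcases lt_trichotomy i k with hik | hik | hik <;> grind

end Jacobiator

section PotentialBivector

open scoped Matrix

variable {Λ : (Fin 4 → ℝ) → Matrix (Fin 2) (Fin 2) ℝ} {z : Fin 4 → ℝ}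

/-- The coefficient of `dθ ∧ dφ` in the differential of the one-form `Λ_{j1} dφ + Λ_{j2} dθ` given
by the `j`-th row of `Λ`. -/
noncomputable def rowCurl (Λ : (Fin 4 → ℝ) → Matrix (Fin 2) (Fin 2) ℝ) (j : Fin 2)
    (z : Fin 4 → ℝ) : ℝ :=
  pd 1 (fun w => Λ w j 0) z - pd 0 (fun w => Λ w j 1) z

/-- The bracket `{p_φ, p_θ}` attached to a potential matrix `Λ`. -/
noncomputable def momentumBracket (Λ : (Fin 4 → ℝ) → Matrix (Fin 2) (Fin 2) ℝ)
    (z : Fin 4 → ℝ) : ℝ :=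
  rowCurl Λ 0 z * z 2 + rowCurl Λ 1 z * z 3

/-- The bivector attached to a potential matrix `Λ`: the coordinates `q` commute,
`{q_i, p_j} = Λ_{ij}`, and `{p_φ, p_θ}` is `momentumBracket Λ`. -/
noncomputable def potentialBivector (Λ : (Fin 4 → ℝ) → Matrix (Fin 2) (Fin 2) ℝ)
    (z : Fin 4 → ℝ) : Matrix (Fin 4) (Fin 4) ℝ :=
  skew 0 (Λ z 0 0) (Λ z 0 1) (Λ z 1 0) (Λ z 1 1) (momentumBracket Λ z)

/-- The `i`-th component of the Nijenhuis torsion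
`[L ∂_φ, L ∂_θ] - L [L ∂_φ, ∂_θ] - L [∂_φ, L ∂_θ]` of the operator field `L ∂_k = ∑_j Λ_{jk} ∂_j`.
The terms with `rowCurl` are the last two brackets. -/
noncomputable def nijenhuisTorsion (Λ : (Fin 4 → ℝ) → Matrix (Fin 2) (Fin 2) ℝ) (i : Fin 2)
    (z : Fin 4 → ℝ) : ℝ :=
  (Λ z 0 0 * pd 0 (fun w => Λ w i 1) z + Λ z 1 0 * pd 1 (fun w => Λ w i 1) z)
    - (Λ z 0 1 * pd 0 (fun w => Λ w i 0) z + Λ z 1 1 * pd 1 (fun w => Λ w i 0) z)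
    + (Λ z i 0 * rowCurl Λ 0 z + Λ z i 1 * rowCurl Λ 1 z)

lemma skew_transpose (a b c d e f : ℝ) : (skew a b c d e f)ᵀ = -skew a b c d e f := by
  ext i j
  fin_cases i <;> fin_cases j <;> simp [skew]

lemma dependsOn_entry {s : Set (Fin 4)} (hΛ : DependsOn Λ s) (i j : Fin 2) :
    DependsOn (fun w => Λ w i j) s :=
  fun _ _ hxy => congrFun₂ (hΛ hxy) i j

lemma pd_two_entry (hΛ : DependsOn Λ {0, 1}) (i j : Fin 2) : pd 2 (fun w => Λ w i j) z = 0 :=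
  pd_eq_zero_of_dependsOn (dependsOn_entry hΛ i j) (by simp) z

lemma pd_three_entry (hΛ : DependsOn Λ {0, 1}) (i j : Fin 2) : pd 3 (fun w => Λ w i j) z = 0 :=
  pd_eq_zero_of_dependsOn (dependsOn_entry hΛ i j) (by simp) z

lemma dependsOn_rowCurl {s : Set (Fin 4)} (hΛ : DependsOn Λ s) (j : Fin 2) :
    DependsOn (rowCurl Λ j) s :=
  fun _ _ hxy => congrArg₂ (· - ·) (dependsOn_pd (dependsOn_entry hΛ j 0) 1 hxy)
    (dependsOn_pd (dependsOn_entry hΛ j 1) 0 hxy)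

lemma differentiableAt_rowCurl (hΛ : ∀ i j, ContDiffAt ℝ 2 (fun w => Λ w i j) z) (j : Fin 2) :
    DifferentiableAt ℝ (rowCurl Λ j) z :=
  (differentiableAt_pd (hΛ j 0) 1).sub (differentiableAt_pd (hΛ j 1) 0)

lemma differentiableAt_momentumBracket (hdiff : ∀ j, DifferentiableAt ℝ (rowCurl Λ j) z) :
    DifferentiableAt ℝ (momentumBracket Λ) z :=
  ((hdiff 0).mul (differentiableAt_apply 2 z)).add ((hdiff 1).mul (differentiableAt_apply 3 z))

lemma pd_two_momentumBracket (hΛ : DependsOn Λ {0, 1})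
    (hdiff : ∀ j, DifferentiableAt ℝ (rowCurl Λ j) z) :
    pd 2 (momentumBracket Λ) z = rowCurl Λ 0 z := by
  refine pd_eq_of_hasDerivAt_update (differentiableAt_momentumBracket hdiff) ?_
  have h2 : (2 : Fin 4) ∉ ({0, 1} : Set (Fin 4)) := by simp
  simpa [momentumBracket, update_eq_of_dependsOn (dependsOn_rowCurl hΛ _) h2] using
    ((hasDerivAt_id (z 2)).const_mul (rowCurl Λ 0 z)).add_const (rowCurl Λ 1 z * z 3)

lemma pd_three_momentumBracket (hΛ : DependsOn Λ {0, 1})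
    (hdiff : ∀ j, DifferentiableAt ℝ (rowCurl Λ j) z) :
    pd 3 (momentumBracket Λ) z = rowCurl Λ 1 z := by
  refine pd_eq_of_hasDerivAt_update (differentiableAt_momentumBracket hdiff) ?_
  have h3 : (3 : Fin 4) ∉ ({0, 1} : Set (Fin 4)) := by simp
  simpa [momentumBracket, update_eq_of_dependsOn (dependsOn_rowCurl hΛ _) h3] using
    ((hasDerivAt_id (z 3)).const_mul (rowCurl Λ 1 z)).const_add (rowCurl Λ 0 z * z 2)

lemma jacobiator_potentialBivector_zero_one_two (hΛ : DependsOn Λ {0, 1}) :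
    jacobiator (potentialBivector Λ) 0 1 2 z = 0 := by
  simp [jacobiator, potentialBivector, skew, Fin.sum_univ_four, pd_neg, pd_const, pd_two_entry hΛ,
    pd_three_entry hΛ]

lemma jacobiator_potentialBivector_zero_one_three (hΛ : DependsOn Λ {0, 1}) :
    jacobiator (potentialBivector Λ) 0 1 3 z = 0 := by
  simp [jacobiator, potentialBivector, skew, Fin.sum_univ_four, pd_neg, pd_const, pd_two_entry hΛ,
    pd_three_entry hΛ]

lemma jacobiator_potentialBivector_zero_two_three (hΛ : DependsOn Λ {0, 1})
    (hdiff : ∀ j, DifferentiableAt ℝ (rowCurl Λ j) z) :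
    jacobiator (potentialBivector Λ) 0 2 3 z = -nijenhuisTorsion Λ 0 z := by
  simp only [jacobiator, potentialBivector, skew, Fin.sum_univ_four, Matrix.of_apply,
    Matrix.cons_val, neg_zero, pd_neg, pd_two_entry hΛ, pd_three_entry hΛ,
    pd_two_momentumBracket hΛ hdiff, pd_three_momentumBracket hΛ hdiff, nijenhuisTorsion]
  ring

lemma jacobiator_potentialBivector_one_two_three (hΛ : DependsOn Λ {0, 1})
    (hdiff : ∀ j, DifferentiableAt ℝ (rowCurl Λ j) z) :
    jacobiator (potentialBivector Λ) 1 2 3 z = -nijenhuisTorsion Λ 1 z := by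
  simp only [jacobiator, potentialBivector, skew, Fin.sum_univ_four, Matrix.of_apply,
    Matrix.cons_val, neg_zero, pd_neg, pd_two_entry hΛ, pd_three_entry hΛ,
    pd_two_momentumBracket hΛ hdiff, pd_three_momentumBracket hΛ hdiff, nijenhuisTorsion]
  ring

theorem isPoissonOn_potentialBivector {U : Set (Fin 4 → ℝ)} (hΛ : DependsOn Λ {0, 1})
    (hdiff : ∀ z ∈ U, ∀ j, DifferentiableAt ℝ (rowCurl Λ j) z)
    (htorsion : ∀ z ∈ U, ∀ i, nijenhuisTorsion Λ i z = 0) :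
    IsPoissonOn (potentialBivector Λ) U := by
  refine isPoissonOn_of_lt (fun _ => skew_transpose _ _ _ _ _ _) fun z hz i j k hij hjk => ?_
  have h012 := jacobiator_potentialBivector_zero_one_two (z := z) hΛ
  have h013 := jacobiator_potentialBivector_zero_one_three (z := z) hΛ
  have h023 := jacobiator_potentialBivector_zero_two_three hΛ (hdiff z hz)
  have h123 := jacobiator_potentialBivector_one_two_three hΛ (hdiff z hz)
  rw [htorsion z hz, neg_zero] at h023 h123
  fin_cases i <;> fin_cases j <;> fin_cases k <;> first | assumption | simp at hij hjk

lemma pd_smul_one_add (s : ℝ) (Λ : (Fin 4 → ℝ) → Matrix (Fin 2) (Fin 2) ℝ) (l : Fin 4)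
    (i j : Fin 2) (z : Fin 4 → ℝ) :
    pd l (fun w => (s • (1 : Matrix (Fin 2) (Fin 2) ℝ) + Λ w) i j) z
      = pd l (fun w => Λ w i j) z :=
  pd_const_add l ((s • (1 : Matrix (Fin 2) (Fin 2) ℝ)) i j) (fun w => Λ w i j) z

lemma rowCurl_smul_one_add (s : ℝ) (Λ : (Fin 4 → ℝ) → Matrix (Fin 2) (Fin 2) ℝ) :
    rowCurl (fun w => s • (1 : Matrix (Fin 2) (Fin 2) ℝ) + Λ w) = rowCurl Λ := by
  funext j z
  simp only [rowCurl, pd_smul_one_add]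

lemma nijenhuisTorsion_smul_one_add (s : ℝ) (Λ : (Fin 4 → ℝ) → Matrix (Fin 2) (Fin 2) ℝ) :
    nijenhuisTorsion (fun w => s • (1 : Matrix (Fin 2) (Fin 2) ℝ) + Λ w) = nijenhuisTorsion Λ := by
  funext i z
  simp only [nijenhuisTorsion, rowCurl, pd_smul_one_add]
  fin_cases i <;> simp <;> ring

lemma potentialBivector_smul_one_add (s : ℝ) (Λ : (Fin 4 → ℝ) → Matrix (Fin 2) (Fin 2) ℝ)
    (z : Fin 4 → ℝ) :
    potentialBivector (fun w => s • (1 : Matrix (Fin 2) (Fin 2) ℝ) + Λ w) z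
      = s • Pcan + potentialBivector Λ z := by
  ext i j
  fin_cases i <;> fin_cases j <;>
    simp [potentialBivector, momentumBracket, rowCurl_smul_one_add, skew, Pcan] <;> ring

theorem isPoissonOn_smul_Pcan_add_potentialBivector {U : Set (Fin 4 → ℝ)} (s : ℝ)
    (hΛ : DependsOn Λ {0, 1}) (hdiff : ∀ z ∈ U, ∀ j, DifferentiableAt ℝ (rowCurl Λ j) z)
    (htorsion : ∀ z ∈ U, ∀ i, nijenhuisTorsion Λ i z = 0) :
    IsPoissonOn (fun z => s • Pcan + potentialBivector Λ z) U := by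
  simp only [← potentialBivector_smul_one_add]
  refine isPoissonOn_potentialBivector (fun _ _ hxy => by simp only [hΛ hxy]) ?_ ?_
  · simpa only [rowCurl_smul_one_add] using hdiff
  · simpa only [nijenhuisTorsion_smul_one_add] using htorsion

end PotentialBivector

section Neumann

variable (a₁ a₂ a₃ : ℝ) (z : Fin 4 → ℝ)

/-- The potential matrix `Λ` of the Neumann system. -/
noncomputable def neumannPotential (a₁ a₂ a₃ : ℝ) (z : Fin 4 → ℝ) : Matrix (Fin 2) (Fin 2) ℝ :=
  !![L11 a₁ a₂ z, L12 a₁ a₂ z; L21 a₁ a₂ z, L22 a₁ a₂ a₃ z]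

lemma piNeu_eq_potentialBivector :
    piNeu a₁ a₂ a₃ = potentialBivector (neumannPotential a₁ a₂ a₃) := rfl

lemma dependsOn_neumannPotential : DependsOn (neumannPotential a₁ a₂ a₃) {0, 1} := by
  intro x y hxy
  have hφ : x 0 = y 0 := hxy 0 (by simp)
  have hθ : x 1 = y 1 := hxy 1 (by simp)
  simp only [neumannPotential, L11, L12, L21, L22, hφ, hθ]

lemma contDiff_L11 : ContDiff ℝ 2 (L11 a₁ a₂) := by
  unfold L11
  fun_prop

lemma contDiffAt_L12 (hz : sin (z 1) ≠ 0) : ContDiffAt ℝ 2 (L12 a₁ a₂) z := by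
  unfold L12
  fun_prop (disch := exact hz)

lemma contDiff_L21 : ContDiff ℝ 2 (L21 a₁ a₂) := by
  unfold L21
  fun_prop

lemma contDiff_L22 : ContDiff ℝ 2 (L22 a₁ a₂ a₃) := by
  unfold L22
  fun_prop

lemma contDiffAt_neumannPotential (hz : sin (z 1) ≠ 0) (i j : Fin 2) :
    ContDiffAt ℝ 2 (fun w => neumannPotential a₁ a₂ a₃ w i j) z := by
  fin_cases i <;> fin_cases j
  · exact (contDiff_L11 a₁ a₂).contDiffAt
  · exact contDiffAt_L12 a₁ a₂ z hz
  · exact (contDiff_L21 a₁ a₂).contDiffAt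
  · exact (contDiff_L22 a₁ a₂ a₃).contDiffAt

lemma hasDerivAt_sin_two_mul (x : ℝ) : HasDerivAt (fun x => sin (2 * x)) (2 * cos (2 * x)) x := by
  simpa [mul_comm] using ((hasDerivAt_id x).const_mul 2).sin

lemma hasDerivAt_sin_sq (x : ℝ) : HasDerivAt (fun x => sin x ^ 2) (sin (2 * x)) x :=
  ((hasDerivAt_sin x).pow 2).congr_deriv (by rw [sin_two_mul]; ring)

lemma hasDerivAt_cos_sq (x : ℝ) : HasDerivAt (fun x => cos x ^ 2) (-sin (2 * x)) x :=
  ((hasDerivAt_cos x).pow 2).congr_deriv (by rw [sin_two_mul]; ring)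

lemma hasDerivAt_cos_mul_sin (x : ℝ) :
    HasDerivAt (fun x => cos x * sin x) (cos (2 * x)) x :=
  ((hasDerivAt_cos x).mul (hasDerivAt_sin x)).congr_deriv (by rw [cos_two_mul']; ring)

lemma hasDerivAt_cos_div_sin {x : ℝ} (hx : sin x ≠ 0) :
    HasDerivAt (fun x => cos x / sin x) (-(1 / sin x ^ 2)) x :=
  ((hasDerivAt_cos x).div (hasDerivAt_sin x) hx).congr_deriv (by
    rw [← sin_sq_add_cos_sq x]; ring)

lemma pd_zero_L11 : pd 0 (L11 a₁ a₂) z = -((a₁ - a₂) * sin (2 * z 0)) := by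
  refine pd_eq_of_hasDerivAt_update ((contDiff_L11 a₁ a₂).differentiable two_ne_zero z) ?_
  simp only [L11, Function.update_self]
  exact (((hasDerivAt_cos_sq (z 0)).const_mul a₁).add
    ((hasDerivAt_sin_sq (z 0)).const_mul a₂)).congr_deriv (by ring)

lemma pd_one_L11 : pd 1 (L11 a₁ a₂) z = 0 := by
  refine pd_eq_zero_of_dependsOn (s := {0}) (fun x y hxy => ?_) (by simp) z
  simp only [L11, hxy 0 rfl]

lemma pd_zero_L12 (hz : sin (z 1) ≠ 0) :
    pd 0 (L12 a₁ a₂) z = (a₁ - a₂) * cos (2 * z 0) * (cos (z 1) / sin (z 1)) := by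
  refine pd_eq_of_hasDerivAt_update
    ((contDiffAt_L12 a₁ a₂ z hz).differentiableAt two_ne_zero) ?_
  simp only [L12, Function.update_self, Function.update_of_ne, ne_eq, one_ne_zero,
    not_false_eq_true]
  exact (((hasDerivAt_sin_two_mul (z 0)).const_mul ((a₁ - a₂) / 2)).mul_const
    (cos (z 1) / sin (z 1))).congr_deriv (by ring)

lemma pd_one_L12 (hz : sin (z 1) ≠ 0) :
    pd 1 (L12 a₁ a₂) z = -((a₁ - a₂) / 2 * sin (2 * z 0) / sin (z 1) ^ 2) := by
  refine pd_eq_of_hasDerivAt_update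
    ((contDiffAt_L12 a₁ a₂ z hz).differentiableAt two_ne_zero) ?_
  simp only [L12, Function.update_self, Function.update_of_ne, ne_eq, zero_ne_one,
    not_false_eq_true]
  exact ((hasDerivAt_cos_div_sin hz).const_mul ((a₁ - a₂) / 2 * sin (2 * z 0))).congr_deriv
    (by ring)

lemma pd_zero_L21 :
    pd 0 (L21 a₁ a₂) z = (a₁ - a₂) * cos (2 * z 0) * (cos (z 1) * sin (z 1)) := by
  refine pd_eq_of_hasDerivAt_update ((contDiff_L21 a₁ a₂).differentiable two_ne_zero z) ?_
  simp only [L21, Function.update_self, Function.update_of_ne, ne_eq, one_ne_zero,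
    not_false_eq_true]
  exact (((hasDerivAt_sin_two_mul (z 0)).const_mul ((a₁ - a₂) / 2)).mul_const
    (cos (z 1) * sin (z 1))).congr_deriv (by ring)

lemma pd_one_L21 :
    pd 1 (L21 a₁ a₂) z = (a₁ - a₂) / 2 * sin (2 * z 0) * cos (2 * z 1) := by
  refine pd_eq_of_hasDerivAt_update ((contDiff_L21 a₁ a₂).differentiable two_ne_zero z) ?_
  simp only [L21, Function.update_self, Function.update_of_ne, ne_eq, zero_ne_one,
    not_false_eq_true]
  exact (hasDerivAt_cos_mul_sin (z 1)).const_mul ((a₁ - a₂) / 2 * sin (2 * z 0))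

lemma pd_zero_L22 :
    pd 0 (L22 a₁ a₂ a₃) z = (a₁ - a₂) * sin (2 * z 0) * cos (z 1) ^ 2 := by
  refine pd_eq_of_hasDerivAt_update ((contDiff_L22 a₁ a₂ a₃).differentiable two_ne_zero z) ?_
  simp only [L22, Function.update_self, Function.update_of_ne, ne_eq, one_ne_zero,
    not_false_eq_true]
  exact (((((hasDerivAt_sin_sq (z 0)).const_mul a₁).add
    ((hasDerivAt_cos_sq (z 0)).const_mul a₂)).mul_const (cos (z 1) ^ 2)).const_add
    (a₃ * sin (z 1) ^ 2)).congr_deriv (by ring)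

lemma pd_one_L22 :
    pd 1 (L22 a₁ a₂ a₃) z
      = (a₃ - (a₁ * sin (z 0) ^ 2 + a₂ * cos (z 0) ^ 2)) * sin (2 * z 1) := by
  refine pd_eq_of_hasDerivAt_update ((contDiff_L22 a₁ a₂ a₃).differentiable two_ne_zero z) ?_
  simp only [L22, Function.update_self, Function.update_of_ne, ne_eq, zero_ne_one,
    not_false_eq_true]
  exact (((hasDerivAt_sin_sq (z 1)).const_mul a₃).add ((hasDerivAt_cos_sq (z 1)).const_mul
    (a₁ * sin (z 0) ^ 2 + a₂ * cos (z 0) ^ 2))).congr_deriv (by ring)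

lemma rowCurl_neumannPotential_zero (hz : sin (z 1) ≠ 0) :
    rowCurl (neumannPotential a₁ a₂ a₃) 0 z
      = -((a₁ - a₂) * cos (2 * z 0) * (cos (z 1) / sin (z 1))) := by
  change pd 1 (L11 a₁ a₂) z - pd 0 (L12 a₁ a₂) z = _
  rw [pd_one_L11, pd_zero_L12 a₁ a₂ z hz, zero_sub]

lemma rowCurl_neumannPotential_one :
    rowCurl (neumannPotential a₁ a₂ a₃) 1 z = -((a₁ - a₂) / 2 * sin (2 * z 0)) := by
  change pd 1 (L21 a₁ a₂) z - pd 0 (L22 a₁ a₂ a₃) z = _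
  rw [pd_one_L21, pd_zero_L22, cos_two_mul (z 1)]
  ring

lemma nijenhuisTorsion_neumannPotential_zero (hz : sin (z 1) ≠ 0) :
    nijenhuisTorsion (neumannPotential a₁ a₂ a₃) 0 z = 0 := by
  change L11 a₁ a₂ z * pd 0 (L12 a₁ a₂) z + L21 a₁ a₂ z * pd 1 (L12 a₁ a₂) z
    - (L12 a₁ a₂ z * pd 0 (L11 a₁ a₂) z + L22 a₁ a₂ a₃ z * pd 1 (L11 a₁ a₂) z)
    + (L11 a₁ a₂ z * rowCurl (neumannPotential a₁ a₂ a₃) 0 z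
      + L12 a₁ a₂ z * rowCurl (neumannPotential a₁ a₂ a₃) 1 z) = 0
  rw [pd_zero_L11, pd_one_L11, pd_zero_L12 a₁ a₂ z hz, pd_one_L12 a₁ a₂ z hz,
    rowCurl_neumannPotential_zero a₁ a₂ a₃ z hz, rowCurl_neumannPotential_one, L12, L21]
  field_simp
  ring

lemma nijenhuisTorsion_neumannPotential_one (hz : sin (z 1) ≠ 0) :
    nijenhuisTorsion (neumannPotential a₁ a₂ a₃) 1 z = 0 := by
  change L11 a₁ a₂ z * pd 0 (L22 a₁ a₂ a₃) z + L21 a₁ a₂ z * pd 1 (L22 a₁ a₂ a₃) z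
    - (L12 a₁ a₂ z * pd 0 (L21 a₁ a₂) z + L22 a₁ a₂ a₃ z * pd 1 (L21 a₁ a₂) z)
    + (L21 a₁ a₂ z * rowCurl (neumannPotential a₁ a₂ a₃) 0 z
      + L22 a₁ a₂ a₃ z * rowCurl (neumannPotential a₁ a₂ a₃) 1 z) = 0
  rw [pd_zero_L21, pd_one_L21, pd_zero_L22, pd_one_L22,
    rowCurl_neumannPotential_zero a₁ a₂ a₃ z hz, rowCurl_neumannPotential_one,
    L11, L12, L21, L22, cos_two_mul' (z 0), cos_two_mul (z 1), sin_two_mul (z 1)]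
  field_simp
  rw [sin_sq (z 1)]
  ring

end Neumann

theorem statement2 (a₁ a₂ a₃ : ℝ) :
    IsPoissonOn (piNeu a₁ a₂ a₃) {z | sin (z 1) ≠ 0} ∧
    IsPoissonOn (fun z => Pcan + piNeu a₁ a₂ a₃ z) {z | sin (z 1) ≠ 0} := by
  have hpencil (s : ℝ) :
      IsPoissonOn (fun z => s • Pcan + piNeu a₁ a₂ a₃ z) {z | sin (z 1) ≠ 0} := by
    rw [piNeu_eq_potentialBivector]
    exact isPoissonOn_smul_Pcan_add_potentialBivector s (dependsOn_neumannPotential a₁ a₂ a₃)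
      (fun z hz => differentiableAt_rowCurl (contDiffAt_neumannPotential a₁ a₂ a₃ z hz))
      (fun z hz => Fin.forall_fin_two.mpr ⟨nijenhuisTorsion_neumannPotential_zero a₁ a₂ a₃ z hz,
        nijenhuisTorsion_neumannPotential_one a₁ a₂ a₃ z hz⟩)
  exact ⟨by simpa using hpencil 0, by simpa using hpencil 1⟩
end

section
/- Let a₁, a₂, a₃ be real parameters, let x₁ = sin φ sin θ, x₂ = cos φ sin θ, x₃ = cos θ, and let Λ be the 2×2 matrix with entries Λ₁₁ = a₁cos²φ + a₂sin²φ, Λ₁₂ = ((a₁−a₂)/2) sin 2φ · (cos θ/sin θ), Λ₂₁ = ((a₁−a₂)/2) sin 2φ · cos θ sin θ, Λ₂₂ = a₃ sin²θ + (a₁ sin²φ + a₂ cos²φ) cos²θ. Then for every λ ∈ ℝ and every (φ,θ) with sin θ ≠ 0, one has (λ−a₂)(λ−a₃)x₁² + (λ−a₁)(λ−a₃)x₂² + (λ−a₁)(λ−a₂)x₃² = det(λ·I₂ − Λ), where I₂ is the 2×2 identity matrix. (Equivalently, the eigenvalues of Λ are the elliptic coordinates u₁, u₂ on the unit sphere determined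 by x₁²/(λ−a₁) + x₂²/(λ−a₂) + x₃²/(λ−a₃) = (λ−u₁)(λ−u₂)/((λ−a₁)(λ−a₂)(λ−a₃)).) -/
/-!
In the coordinates `(φ, θ)` of the unit sphere, `Λ` is the matrix of the compression of
`A = diag(a₁, a₂, a₃)` to the tangent plane at `x`: its entries are `eⁱ ⬝ A eⱼ`, where
`e₁ = ∂x/∂φ`, `e₂ = ∂x/∂θ` and `e¹, e²` is the dual frame. By duality `t - Λ` is the compression
of `t - A`, so by the Binet–Cauchy identity its determinant is
`(e¹ × e²) ⬝ ((t - A) e₁ × (t - A) e₂)`. The cofactor matrix of `t - A` moves out of the second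
cross product, and `e¹ × e²` and `e₁ × e₂` are `x / sin θ` and `sin θ • x`, which leaves the
quadratic form of the adjugate of `t - A` at `x`.
-/

open Real

section Compression

open Matrix

variable {R : Type*} [CommRing R]

theorem mulVec_cross_mulVec (M : Matrix (Fin 3) (Fin 3) R) (v w : Fin 3 → R) :
    (M *ᵥ v) ⨯₃ (M *ᵥ w) = M.adjugateᵀ *ᵥ (v ⨯₃ w) := by
  ext i
  fin_cases i <;>
    simp only [cross_apply, adjugate_fin_three, mulVec, vec3_dotProduct, transpose_apply, of_apply,
      cons_val', cons_val, cons_val_fin_one, Fin.reduceFinMk, Fin.zero_eta, Fin.mk_one] <;>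
    ring

theorem det_mul_eq_cross_dotProduct_cross (P : Matrix (Fin 2) (Fin 3) R)
    (Q : Matrix (Fin 3) (Fin 2) R) :
    (P * Q).det = (P.row 0 ⨯₃ P.row 1) ⬝ᵥ (Q.col 0 ⨯₃ Q.col 1) := by
  rw [cross_dot_cross, det_fin_two]
  rfl

theorem det_mul_mul_eq_cross_dotProduct_adjugate (P : Matrix (Fin 2) (Fin 3) R)
    (M : Matrix (Fin 3) (Fin 3) R) (Q : Matrix (Fin 3) (Fin 2) R) :
    (P * M * Q).det =
      (P.row 0 ⨯₃ P.row 1) ⬝ᵥ M.adjugateᵀ *ᵥ (Q.col 0 ⨯₃ Q.col 1) := by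
  rw [Matrix.mul_assoc, det_mul_eq_cross_dotProduct_cross, ← mulVec_cross_mulVec]
  rfl

variable {m n : Type*} [Fintype n] [DecidableEq n]

theorem smul_one_sub_mul_mul [DecidableEq m] {P : Matrix m n R} {Q : Matrix n m R}
    (hPQ : P * Q = 1) (A : Matrix n n R) (t : R) :
    t • (1 : Matrix m m R) - P * A * Q = P * (t • (1 : Matrix n n R) - A) * Q := by
  rw [Matrix.mul_sub, Matrix.sub_mul, Matrix.mul_smul, Matrix.mul_one, Matrix.smul_mul, hPQ]

theorem dotProduct_adjugate_smul_one_sub_diagonal (a x : n → R) (t : R) :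
    x ⬝ᵥ (t • (1 : Matrix n n R) - diagonal a).adjugateᵀ *ᵥ x =
      ∑ i, (∏ j ∈ Finset.univ.erase i, (t - a j)) * x i ^ 2 := by
  rw [smul_one_eq_diagonal, diagonal_sub, adjugate_diagonal, diagonal_transpose, dotProduct]
  refine Finset.sum_congr rfl fun i _ ↦ ?_
  rw [mulVec_diagonal]
  ring

theorem sum_prod_erase_mul_fin_three (f g : Fin 3 → R) :
    ∑ i, (∏ j ∈ Finset.univ.erase i, f j) * g i =
      f 1 * f 2 * g 0 + f 0 * f 2 * g 1 + f 0 * f 1 * g 2 := by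
  have erase_zero : Finset.univ.erase (0 : Fin 3) = {1, 2} := rfl
  have erase_one : Finset.univ.erase (1 : Fin 3) = {0, 2} := rfl
  have erase_two : Finset.univ.erase (2 : Fin 3) = {0, 1} := rfl
  simp [Fin.sum_univ_three, erase_zero, erase_one, erase_two]

end Compression

section Sphere

open Matrix

/-- The point of the unit sphere with azimuth `φ`, measured from the second axis, and polar
angle `θ`. -/
noncomputable def spherePoint (φ θ : ℝ) : Fin 3 → ℝ :=
  ![sin φ * sin θ, cos φ * sin θ, cos θ]

/-- The coordinate frame of the sphere: the columns are the partial derivatives of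
`spherePoint φ θ` with respect to `φ` and `θ`. -/
noncomputable def sphereFrame (φ θ : ℝ) : Matrix (Fin 3) (Fin 2) ℝ :=
  !![cos φ * sin θ, sin φ * cos θ;
     -(sin φ * sin θ), cos φ * cos θ;
     0, -sin θ]

/-- The frame of tangent vectors dual to `sphereFrame φ θ`, as rows. The division makes this
meaningful only where `sin θ ≠ 0`. -/
noncomputable def sphereCoframe (φ θ : ℝ) : Matrix (Fin 2) (Fin 3) ℝ :=
  !![cos φ / sin θ, -(sin φ / sin θ), 0;
     sin φ * cos θ, cos φ * cos θ, -sin θ]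

theorem sphereCoframe_mul_sphereFrame (φ : ℝ) {θ : ℝ} (hθ : sin θ ≠ 0) :
    sphereCoframe φ θ * sphereFrame φ θ = 1 := by
  ext i j
  fin_cases i <;> fin_cases j <;>
    simp only [sphereCoframe, sphereFrame, mul_apply, Fin.sum_univ_three, one_apply, of_apply,
      cons_val', cons_val, cons_val_fin_one, Fin.zero_eta, Fin.mk_one, zero_ne_one, one_ne_zero,
      if_true, if_false] <;>
    field_simp
  · linear_combination cos_sq_add_sin_sq φ
  · ring
  · ring
  · linear_combination cos θ ^ 2 * sin_sq_add_cos_sq φ + sin_sq_add_cos_sq θ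

theorem cross_row_sphereCoframe (φ θ : ℝ) :
    (sphereCoframe φ θ).row 0 ⨯₃ (sphereCoframe φ θ).row 1 = (sin θ)⁻¹ • spherePoint φ θ := by
  ext i
  fin_cases i <;>
    simp only [cross_apply, sphereCoframe, spherePoint, row_apply, of_apply, cons_val', cons_val,
      cons_val_fin_one, Pi.smul_apply, smul_eq_mul, Fin.zero_eta, Fin.mk_one, Fin.reduceFinMk]
  · ring
  · ring
  · linear_combination (sin θ)⁻¹ * cos θ * cos_sq_add_sin_sq φ

theorem cross_col_sphereFrame (φ θ : ℝ) :
    (sphereFrame φ θ).col 0 ⨯₃ (sphereFrame φ θ).col 1 = sin θ • spherePoint φ θ := by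
  ext i
  fin_cases i <;>
    simp only [cross_apply, sphereFrame, spherePoint, col_apply, of_apply, cons_val', cons_val,
      cons_val_fin_one, Pi.smul_apply, smul_eq_mul, Fin.zero_eta, Fin.mk_one, Fin.reduceFinMk]
  · ring
  · ring
  · linear_combination sin θ * cos θ * cos_sq_add_sin_sq φ

theorem sphereCoframe_mul_diagonal_mul_sphereFrame (a₁ a₂ a₃ φ : ℝ) {θ : ℝ} (hθ : sin θ ≠ 0) :
    sphereCoframe φ θ * diagonal ![a₁, a₂, a₃] * sphereFrame φ θ =
      !![a₁ * cos φ ^ 2 + a₂ * sin φ ^ 2,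
         (a₁ - a₂) / 2 * sin (2 * φ) * (cos θ / sin θ);
         (a₁ - a₂) / 2 * sin (2 * φ) * (cos θ * sin θ),
         a₃ * sin θ ^ 2 + (a₁ * sin φ ^ 2 + a₂ * cos φ ^ 2) * cos θ ^ 2] := by
  ext i j
  rw [mul_apply, Fin.sum_univ_three]
  fin_cases i <;> fin_cases j <;>
    simp only [sphereCoframe, sphereFrame, mul_diagonal, sin_two_mul, of_apply, cons_val',
      cons_val, cons_val_fin_one, Fin.zero_eta, Fin.mk_one] <;>
    field_simp <;> ring

theorem det_smul_one_sub_sphereCoframe_mul_mul (A : Matrix (Fin 3) (Fin 3) ℝ) (t φ : ℝ) {θ : ℝ}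
    (hθ : sin θ ≠ 0) :
    (t • (1 : Matrix (Fin 2) (Fin 2) ℝ) - sphereCoframe φ θ * A * sphereFrame φ θ).det =
      spherePoint φ θ ⬝ᵥ
        (t • (1 : Matrix (Fin 3) (Fin 3) ℝ) - A).adjugateᵀ *ᵥ spherePoint φ θ := by
  rw [smul_one_sub_mul_mul (sphereCoframe_mul_sphereFrame φ hθ),
    det_mul_mul_eq_cross_dotProduct_adjugate, cross_row_sphereCoframe,
    cross_col_sphereFrame, mulVec_smul, smul_dotProduct, dotProduct_smul, smul_smul,
    inv_mul_cancel₀ hθ, one_smul]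

end Sphere

theorem statement4 (a₁ a₂ a₃ t φ θ : ℝ) (h : sin θ ≠ 0) :
    (t - a₂) * (t - a₃) * (sin φ * sin θ) ^ 2
      + (t - a₁) * (t - a₃) * (cos φ * sin θ) ^ 2
      + (t - a₁) * (t - a₂) * (cos θ) ^ 2
    = Matrix.det (t • (1 : Matrix (Fin 2) (Fin 2) ℝ) -
        !![a₁ * cos φ ^ 2 + a₂ * sin φ ^ 2,
           (a₁ - a₂) / 2 * sin (2 * φ) * (cos θ / sin θ);
           (a₁ - a₂) / 2 * sin (2 * φ) * (cos θ * sin θ),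
           a₃ * sin θ ^ 2 + (a₁ * sin φ ^ 2 + a₂ * cos φ ^ 2) * cos θ ^ 2]) := by
  rw [← sphereCoframe_mul_diagonal_mul_sphereFrame a₁ a₂ a₃ φ h,
    det_smul_one_sub_sphereCoframe_mul_mul _ _ _ h, dotProduct_adjugate_smul_one_sub_diagonal,
    sum_prod_erase_mul_fin_three]
  rfl
end

section
/- Let g, h be smooth nowhere-vanishing real functions of θ on an open interval I, let G and K be smooth functions on I with G′ = 1/g and K′ = h/g, let α ∈ ℂ, i = √(−1). For λ ∈ ℂ, λ ≠ 0, define the complex-valued functions 𝓑(λ) = λ² − i(g(θ) p_θ − i h(θ) p_φ)·λ + α e^{iφ − K(θ)} and 𝓐(λ) = i G(θ) − i p_φ/λ on ℝ × I × ℝ². Then with respect to the canonical Poisson bracket (extended ℂ-bilinearly): {𝓑(λ), 𝓐(μ)} = (λ/(μ−λ))·(𝓑(λ)/λ − 𝓑(μ)/μ) for all nonzero λ ≠ μ, and {𝓐(λ), 𝓐(μ)} = 0 for all nonzero λ, μ. -/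
open Real Complex

/-- Partial derivative of a complex-valued function in the `i`-th coordinate
direction on `ℝ⁴` (coordinates `z 0 = φ`, `z 1 = θ`, `z 2 = p_φ`, `z 3 = p_θ`). -/
noncomputable def pdC (i : Fin 4) (F : (Fin 4 → ℝ) → ℂ) (z : Fin 4 → ℝ) : ℂ :=
  fderiv ℝ F z (Pi.single i 1)

/-- The canonical Poisson bracket, extended ℂ-bilinearly to complex-valued functions. -/
noncomputable def pbC (F G : (Fin 4 → ℝ) → ℂ) (z : Fin 4 → ℝ) : ℂ :=
  pdC 0 F z * pdC 2 G z - pdC 2 F z * pdC 0 G z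
    + pdC 1 F z * pdC 3 G z - pdC 3 F z * pdC 1 G z

/-- `𝓑(λ) = λ² − i(g(θ) p_θ − i h(θ) p_φ)·λ + α e^{iφ − K(θ)}`. -/
noncomputable def BB (g h K : ℝ → ℝ) (α l : ℂ) (z : Fin 4 → ℝ) : ℂ :=
  l ^ 2 - Complex.I * ((g (z 1) : ℂ) * (z 3 : ℂ) - Complex.I * (h (z 1) : ℂ) * (z 2 : ℂ)) * l
    + α * Complex.exp (Complex.I * (z 0 : ℂ) - (K (z 1) : ℂ))

/-- `𝓐(λ) = i G(θ) − i p_φ/λ`. -/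
noncomputable def AA (G : ℝ → ℝ) (l : ℂ) (z : Fin 4 → ℝ) : ℂ :=
  Complex.I * (G (z 1) : ℂ) - Complex.I * (z 2 : ℂ) / l

/-!
`𝓐(μ)` depends neither on `φ` nor on `p_θ`, so `{F, 𝓐(μ)} = -(i/μ) ∂F/∂φ - i G' ∂F/∂p_θ` for every
`F`. Hence `{𝓐(λ), 𝓐(μ)} = 0`, and, writing `E = e^{iφ - K}`, `{𝓑(λ), 𝓐(μ)} = α E / μ - g G' λ`,
where `g G' = 1`. On the other side, the momenta enter `𝓑(λ)` linearly in `λ`, so they cancel in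
`𝓑(λ)/λ - 𝓑(μ)/μ`, which leaves `(μ - λ) (α E / (λ μ) - 1)`.
-/

section

variable {g h G K : ℝ → ℝ} {z : Fin 4 → ℝ}

/-- Freezing the other coordinates computes a partial derivative only where `F` is jointly
differentiable: elsewhere `pdC` takes the junk value `0`. -/
theorem pdC_eq_of_hasDerivAt_update {F : (Fin 4 → ℝ) → ℂ} {F' : ℂ} {i : Fin 4}
    (hF : DifferentiableAt ℝ F z)
    (hF' : HasDerivAt (fun t => F (Function.update z i t)) F' (z i)) :
    pdC i F z = F' := by
  have hcomp : HasDerivAt (fun t => F (Function.update z i t)) (pdC i F z) (z i) :=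
    HasFDerivAt.comp_hasDerivAt (z i) (by simpa using hF.hasFDerivAt)
      (hasDerivAt_update z i (z i))
  exact hcomp.unique hF'

theorem differentiableAt_AA (hG : DifferentiableAt ℝ G (z 1)) (l : ℂ) :
    DifferentiableAt ℝ (AA G l) z := by
  unfold AA
  fun_prop

theorem pdC_phi_AA (hG : DifferentiableAt ℝ G (z 1)) (l : ℂ) : pdC 0 (AA G l) z = 0 :=
  pdC_eq_of_hasDerivAt_update (differentiableAt_AA hG l) <| by
    simpa [AA] using hasDerivAt_const (z 0) (AA G l z)

theorem pdC_theta_AA {G' : ℝ} (hG : HasDerivAt G G' (z 1)) (l : ℂ) :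
    pdC 1 (AA G l) z = I * G' :=
  pdC_eq_of_hasDerivAt_update (differentiableAt_AA hG.differentiableAt l) <| by
    simpa [AA] using (hG.ofReal_comp.const_mul I).sub_const (I * z 2 / l)

theorem pdC_pphi_AA (hG : DifferentiableAt ℝ G (z 1)) (l : ℂ) :
    pdC 2 (AA G l) z = -(I / l) :=
  pdC_eq_of_hasDerivAt_update (differentiableAt_AA hG l) <| by
    simpa [AA] using
      (((hasDerivAt_id (z 2)).ofReal_comp.const_mul I).div_const l).const_sub (I * G (z 1))

theorem pdC_ptheta_AA (hG : DifferentiableAt ℝ G (z 1)) (l : ℂ) : pdC 3 (AA G l) z = 0 :=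
  pdC_eq_of_hasDerivAt_update (differentiableAt_AA hG l) <| by
    simpa [AA] using hasDerivAt_const (z 3) (AA G l z)

theorem pbC_AA_right {G' : ℝ} (hG : HasDerivAt G G' (z 1)) (F : (Fin 4 → ℝ) → ℂ) (m : ℂ) :
    pbC F (AA G m) z = -(I / m) * pdC 0 F z - I * G' * pdC 3 F z := by
  have hG₀ := hG.differentiableAt
  rw [pbC, pdC_phi_AA hG₀, pdC_theta_AA hG, pdC_pphi_AA hG₀, pdC_ptheta_AA hG₀]
  ring

theorem pbC_AA_AA (hG : DifferentiableAt ℝ G (z 1)) (l m : ℂ) :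
    pbC (AA G l) (AA G m) z = 0 := by
  rw [pbC_AA_right hG.hasDerivAt, pdC_phi_AA hG, pdC_ptheta_AA hG]
  ring

theorem differentiableAt_BB (hg : DifferentiableAt ℝ g (z 1)) (hh : DifferentiableAt ℝ h (z 1))
    (hK : DifferentiableAt ℝ K (z 1)) (α l : ℂ) : DifferentiableAt ℝ (BB g h K α l) z := by
  unfold BB
  fun_prop

theorem pdC_phi_BB (hg : DifferentiableAt ℝ g (z 1)) (hh : DifferentiableAt ℝ h (z 1))
    (hK : DifferentiableAt ℝ K (z 1)) (α l : ℂ) :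
    pdC 0 (BB g h K α l) z = I * (α * exp (I * z 0 - K (z 1))) := by
  refine pdC_eq_of_hasDerivAt_update (differentiableAt_BB hg hh hK α l) ?_
  have hexp := (((hasDerivAt_id (z 0)).ofReal_comp.const_mul I).sub_const (K (z 1) : ℂ)).cexp
  simpa [BB, mul_comm, mul_left_comm] using hexp.const_mul α

theorem pdC_ptheta_BB (hg : DifferentiableAt ℝ g (z 1)) (hh : DifferentiableAt ℝ h (z 1))
    (hK : DifferentiableAt ℝ K (z 1)) (α l : ℂ) :
    pdC 3 (BB g h K α l) z = -(I * g (z 1) * l) := by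
  refine pdC_eq_of_hasDerivAt_update (differentiableAt_BB hg hh hK α l) ?_
  have hmom := ((hasDerivAt_id (z 3)).ofReal_comp.const_mul (g (z 1) : ℂ)).sub_const
    (I * h (z 1) * z 2)
  simpa [BB] using ((hmom.const_mul I).mul_const l).const_sub (l ^ 2)

theorem pbC_BB_AA {G' : ℝ} (hg : DifferentiableAt ℝ g (z 1)) (hh : DifferentiableAt ℝ h (z 1))
    (hK : DifferentiableAt ℝ K (z 1)) (hG : HasDerivAt G G' (z 1)) (α l m : ℂ) :
    pbC (BB g h K α l) (AA G m) z = α * exp (I * z 0 - K (z 1)) / m - g (z 1) * G' * l := by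
  rw [pbC_AA_right hG, pdC_phi_BB hg hh hK, pdC_ptheta_BB hg hh hK]
  linear_combination (g (z 1) * G' * l - α * exp (I * z 0 - K (z 1)) / m) * I_sq

theorem BB_div_sub_BB_div (g h K : ℝ → ℝ) (α : ℂ) {l m : ℂ} (hl : l ≠ 0) (hm : m ≠ 0)
    (z : Fin 4 → ℝ) :
    BB g h K α l z / l - BB g h K α m z / m
      = (m - l) * (α * exp (I * z 0 - K (z 1)) / (l * m) - 1) := by
  unfold BB
  field_simp
  ring

theorem statement8_general {U : Set ℝ} (hU : IsOpen U) (α : ℂ)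
    (hg : DifferentiableOn ℝ g U) (hh : DifferentiableOn ℝ h U) (hK : DifferentiableOn ℝ K U)
    (hg0 : ∀ t ∈ U, g t ≠ 0) (hG : ∀ t ∈ U, HasDerivAt G (1 / g t) t) :
    (∀ l m : ℂ, l ≠ 0 → m ≠ 0 → l ≠ m → ∀ z : Fin 4 → ℝ, z 1 ∈ U →
      pbC (BB g h K α l) (AA G m) z
        = l / (m - l) * (BB g h K α l z / l - BB g h K α m z / m)) ∧
    (∀ l m : ℂ, l ≠ 0 → m ≠ 0 → ∀ z : Fin 4 → ℝ, z 1 ∈ U →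
      pbC (AA G l) (AA G m) z = 0) := by
  refine ⟨fun l m hl hm hlm z hz => ?_,
    fun l m _ _ z hz => pbC_AA_AA (hG _ hz).differentiableAt l m⟩
  have hnhds : U ∈ nhds (z 1) := hU.mem_nhds hz
  have hgG' : (g (z 1) : ℂ) * (1 / g (z 1) : ℝ) = 1 := by
    exact_mod_cast mul_one_div_cancel (hg0 _ hz)
  have hml : m - l ≠ 0 := sub_ne_zero.mpr hlm.symm
  rw [pbC_BB_AA (hg.differentiableAt hnhds) (hh.differentiableAt hnhds)
    (hK.differentiableAt hnhds) (hG _ hz), hgG', BB_div_sub_BB_div g h K α hl hm]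
  field_simp

end

theorem statement8 (c d : ℝ) (g h G K : ℝ → ℝ) (α : ℂ)
    (hg : ContDiffOn ℝ (⊤ : ℕ∞) g (Set.Ioo c d)) (hh : ContDiffOn ℝ (⊤ : ℕ∞) h (Set.Ioo c d))
    (hg0 : ∀ t ∈ Set.Ioo c d, g t ≠ 0) (hh0 : ∀ t ∈ Set.Ioo c d, h t ≠ 0)
    (hG : ∀ t ∈ Set.Ioo c d, HasDerivAt G (1 / g t) t)
    (hK : ∀ t ∈ Set.Ioo c d, HasDerivAt K (h t / g t) t) :
    (∀ l m : ℂ, l ≠ 0 → m ≠ 0 → l ≠ m → ∀ z : Fin 4 → ℝ, z 1 ∈ Set.Ioo c d →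
      pbC (BB g h K α l) (AA G m) z
        = l / (m - l) * (BB g h K α l z / l - BB g h K α m z / m)) ∧
    (∀ l m : ℂ, l ≠ 0 → m ≠ 0 → ∀ z : Fin 4 → ℝ, z 1 ∈ Set.Ioo c d →
      pbC (AA G l) (AA G m) z = 0) :=
  statement8_general isOpen_Ioo α (hg.differentiableOn (by simp)) (hh.differentiableOn (by simp))
    (fun t ht => (hK t ht).differentiableAt.differentiableWithinAt) hg0 hG
end

section
/- Let a ≥ 0 and b, c ∈ ℝ, and let x_i, J_i be the spherical realization on the domain where sin θ ≠ 0 and cos θ ≠ 0 (so J₁² + J₂² + J₃² + a/x₃² = p_θ² + p_φ²/sin²θ + a/cos²θ ≥ 0). Define the Sokolov system integrals Ĥ₁ = J₁² + J₂² + 2J₃² + c J₃ + b (J₃ x₁ − x₃ J₁) + a/x₃² and Ĥ₂ = (2J₃ + c + b x₁)·√(J₁² + J₂² + J₃² + a/x₃²). Then {Ĥ₁, Ĥ₂} = 0 with respect to the canonical Poisson bracket. -/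
open Real

/-- The canonical Poisson bracket on functions of `(φ, θ, p_φ, p_θ)`. -/
noncomputable def pb (F G : (Fin 4 → ℝ) → ℝ) (z : Fin 4 → ℝ) : ℝ :=
  pd 0 F z * pd 2 G z - pd 2 F z * pd 0 G z + pd 1 F z * pd 3 G z - pd 3 F z * pd 1 G z

noncomputable def x1 (z : Fin 4 → ℝ) : ℝ := sin (z 0) * sin (z 1)
noncomputable def x3 (z : Fin 4 → ℝ) : ℝ := cos (z 1)
noncomputable def J1 (z : Fin 4 → ℝ) : ℝ := sin (z 0) * cos (z 1) / sin (z 1) * z 2 - cos (z 0) * z 3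
noncomputable def J2 (z : Fin 4 → ℝ) : ℝ := cos (z 0) * cos (z 1) / sin (z 1) * z 2 + sin (z 0) * z 3
noncomputable def J3 (z : Fin 4 → ℝ) : ℝ := -(z 2)

/-!
Put `f = 2J₃ + c + b x₁` and `K = J₁² + J₂² + J₃² + a/x₃²`, so that `Ĥ₂ = f √K`. The brackets of the
`Jᵢ` and `xⱼ` are those of the Lie algebra `e(3)`, and they give `{Ĥ₁, f} = μ f` and
`{Ĥ₁, K} = -2μ K` with the same cofactor `μ = b x₂`; the second identity uses `x · J = 0`. Hence
`f² K` Poisson commutes with `Ĥ₁`, and so does `f √K` where `K > 0`. Where `K = 0` the derivative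
of `f √K` vanishes if it exists, and `fderiv` is zero by convention if it does not.
-/

section Bracket

variable {F G H : (Fin 4 → ℝ) → ℝ} {z : Fin 4 → ℝ}

theorem pb_antisymm (F G : (Fin 4 → ℝ) → ℝ) : pb F G z = -pb G F z := by
  simp only [pb]
  ring

theorem pb_self : pb F F z = 0 := by
  simp only [pb]
  ring

theorem pb_eq_zero_of_fderiv_eq_zero (hG : fderiv ℝ G z = 0) : pb F G z = 0 := by
  simp [pb, pd, hG]

theorem pb_const (k : ℝ) : pb F (fun _ => k) z = 0 :=
  pb_eq_zero_of_fderiv_eq_zero (hasFDerivAt_const k z).fderiv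

theorem pb_add (hG : DifferentiableAt ℝ G z) (hH : DifferentiableAt ℝ H z) :
    pb F (fun w => G w + H w) z = pb F G z + pb F H z := by
  simp only [pb, pd, fderiv_fun_add hG hH, add_apply]
  ring

theorem pb_sub (hG : DifferentiableAt ℝ G z) (hH : DifferentiableAt ℝ H z) :
    pb F (fun w => G w - H w) z = pb F G z - pb F H z := by
  simp only [pb, pd, fderiv_fun_sub hG hH, sub_apply]
  ring

theorem pb_mul (hG : DifferentiableAt ℝ G z) (hH : DifferentiableAt ℝ H z) :
    pb F (fun w => G w * H w) z = G z * pb F H z + H z * pb F G z := by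
  simp only [pb, pd, fderiv_fun_mul hG hH, add_apply, smul_apply, smul_eq_mul]
  ring

theorem pb_comp {g : ℝ → ℝ} {g' : ℝ} (hg : HasDerivAt g g' (G z)) (hG : DifferentiableAt ℝ G z) :
    pb F (fun w => g (G w)) z = g' * pb F G z := by
  have h : HasFDerivAt (fun w => g (G w)) _ z := hg.comp_hasFDerivAt z hG.hasFDerivAt
  simp only [pb, pd, h.fderiv, smul_apply, smul_eq_mul]
  ring

theorem pb_const_mul (k : ℝ) (hG : DifferentiableAt ℝ G z) :
    pb F (fun w => k * G w) z = k * pb F G z :=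
  pb_comp (hasDerivAt_const_mul k) hG

theorem pb_sq (hG : DifferentiableAt ℝ G z) :
    pb F (fun w => G w ^ 2) z = 2 * G z * pb F G z := by
  simpa using pb_comp (hasDerivAt_pow 2 (G z)) hG

theorem pb_const_div_sq (k : ℝ) (hG : DifferentiableAt ℝ G z) (hGz : G z ≠ 0) :
    pb F (fun w => k / G w ^ 2) z = -2 * k / G z ^ 3 * pb F G z := by
  have h := (hasDerivAt_const (G z) k).fun_div (hasDerivAt_pow 2 (G z)) (pow_ne_zero 2 hGz)
  refine pb_comp (h.congr_deriv ?_) hG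
  field_simp
  push_cast
  ring

theorem pb_sqrt (hG : DifferentiableAt ℝ G z) (hGz : G z ≠ 0) :
    pb F (fun w => √(G w)) z = 1 / (2 * √(G z)) * pb F G z :=
  pb_comp (hasDerivAt_sqrt hGz) hG

-- `s` need not be differentiable: if `f z ≠ 0`, then `z` is a local extremum of `f * s`; if
-- `f z = 0`, then `f` is `O(w - z)` and `s` is `o(1)`.
theorem fderiv_mul_eq_zero_of_nonneg_of_eq_zero {E : Type*} [NormedAddCommGroup E]
    [NormedSpace ℝ E] {f s : E → ℝ} {z : E} (hf : DifferentiableAt ℝ f z) (hs : ContinuousAt s z)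
    (hs_nonneg : ∀ w, 0 ≤ s w) (hsz : s z = 0) : fderiv ℝ (fun w => f w * s w) z = 0 := by
  rcases lt_trichotomy (f z) 0 with hfz | hfz | hfz
  · refine IsLocalMax.fderiv_eq_zero ?_
    filter_upwards [hf.continuousAt.eventually_lt_const hfz] with w hfw
    rw [hsz, mul_zero]
    exact mul_nonpos_of_nonpos_of_nonneg hfw.le (hs_nonneg w)
  · have hfO : f =O[nhds z] fun w => w - z := by simpa [hfz] using hf.isBigO_sub
    have hso : s =o[nhds z] fun _ => (1 : ℝ) := by
      simpa [Asymptotics.isLittleO_one_iff, ContinuousAt, hsz] using hs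
    have hfs : HasFDerivAt (fun w => f w * s w) (0 : E →L[ℝ] ℝ) z :=
      .of_isLittleO (by simpa [hsz] using hfO.norm_right.mul_isLittleO hso)
    exact hfs.fderiv
  · refine IsLocalMin.fderiv_eq_zero ?_
    filter_upwards [hf.continuousAt.eventually_const_lt hfz] with w hfw
    rw [hsz, mul_zero]
    exact mul_nonneg hfw.le (hs_nonneg w)

theorem pb_mul_sqrt_eq_zero (hG : DifferentiableAt ℝ G z) (hH : DifferentiableAt ℝ H z)
    (hHz : 0 ≤ H z) {μ : ℝ} (hFG : pb F G z = μ * G z) (hFH : pb F H z = -2 * μ * H z) :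
    pb F (fun w => G w * √(H w)) z = 0 := by
  rcases hHz.eq_or_lt with hHz | hHz
  · exact pb_eq_zero_of_fderiv_eq_zero <| fderiv_mul_eq_zero_of_nonneg_of_eq_zero hG
      hH.continuousAt.sqrt (fun w => sqrt_nonneg _) (by rw [← hHz, sqrt_zero])
  · have h_ne : √(H z) ≠ 0 := (sqrt_pos.2 hHz).ne'
    rw [pb_mul hG (hH.sqrt hHz.ne'), pb_sqrt hH hHz.ne', hFG, hFH]
    field_simp
    rw [sq_sqrt hHz.le]
    ring

end Bracket

section Cotangent

variable {t : ℝ}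

theorem sin_mul_cot (ht : sin t ≠ 0) : sin t * cot t = cos t := by
  rw [cot_eq_cos_div_sin, mul_div_cancel₀ _ ht]

theorem hasDerivAt_cot (ht : sin t ≠ 0) : HasDerivAt cot (-1 / sin t ^ 2) t := by
  rw [funext cot_eq_cos_div_sin]
  refine ((hasDerivAt_cos t).fun_div (hasDerivAt_sin t) ht).congr_deriv ?_
  congr 1
  linear_combination -sin_sq_add_cos_sq t

end Cotangent

section SphericalRealization

/-- The coordinate `x₂` of the spherical realization, completing `x1` and `x3`. -/
noncomputable def x2 (z : Fin 4 → ℝ) : ℝ := cos (z 0) * sin (z 1)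

variable {z : Fin 4 → ℝ}

theorem x_dot_J_eq_zero (hs : sin (z 1) ≠ 0) :
    x1 z * J1 z + x2 z * J2 z + x3 z * J3 z = 0 := by
  simp only [x1, x2, x3, J1, J2, J3]
  field_simp
  linear_combination z 2 * cos (z 1) * sin_sq_add_cos_sq (z 0)

@[fun_prop]
theorem differentiableAt_x1 : DifferentiableAt ℝ x1 z := by
  unfold x1
  fun_prop

@[fun_prop]
theorem differentiableAt_x3 : DifferentiableAt ℝ x3 z := by
  unfold x3
  fun_prop

@[fun_prop]
theorem differentiableAt_J1 (hs : sin (z 1) ≠ 0) : DifferentiableAt ℝ J1 z := by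
  unfold J1
  fun_prop (disch := assumption)

@[fun_prop]
theorem differentiableAt_J2 (hs : sin (z 1) ≠ 0) : DifferentiableAt ℝ J2 z := by
  unfold J2
  fun_prop (disch := assumption)

@[fun_prop]
theorem differentiableAt_J3 : DifferentiableAt ℝ J3 z := by
  unfold J3
  fun_prop

theorem pd_x1 (i : Fin 4) :
    pd i x1 z = ![cos (z 0) * sin (z 1), sin (z 0) * cos (z 1), 0, 0] i := by
  have h : HasFDerivAt x1 _ z :=
    (hasFDerivAt_apply 0 z).sin.fun_mul (hasFDerivAt_apply 1 z).sin
  rw [pd, h.fderiv]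
  fin_cases i <;> simp [mul_comm]

theorem pd_x3 (i : Fin 4) : pd i x3 z = ![0, -sin (z 1), 0, 0] i := by
  have h : HasFDerivAt x3 _ z := (hasFDerivAt_apply 1 z).cos
  rw [pd, h.fderiv]
  fin_cases i <;> simp

theorem pd_J3 (i : Fin 4) : pd i J3 z = ![0, 0, -1, 0] i := by
  have h : HasFDerivAt J3 _ z := HasFDerivAt.fun_neg (hasFDerivAt_apply (𝕜 := ℝ) 2 z)
  rw [pd, h.fderiv]
  fin_cases i <;> simp

-- `J1` and `J2` are the cases `(f, g) = (sin, cos)` and `(f, g) = (cos, -sin)`.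
theorem pd_mul_cot_sub_mul {f g : ℝ → ℝ} {f' g' : ℝ} (hf : HasDerivAt f f' (z 0))
    (hg : HasDerivAt g g' (z 0)) (hs : sin (z 1) ≠ 0) (i : Fin 4) :
    pd i (fun w => f (w 0) * cot (w 1) * w 2 - g (w 0) * w 3) z =
      ![f' * cot (z 1) * z 2 - g' * z 3, -(f (z 0) * z 2) / sin (z 1) ^ 2,
        f (z 0) * cot (z 1), -g (z 0)] i := by
  have hφ := hasFDerivAt_apply (𝕜 := ℝ) 0 z
  have hθ := hasFDerivAt_apply (𝕜 := ℝ) 1 z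
  have hcot := (hasDerivAt_cot hs).comp_hasFDerivAt z hθ
  have h := (((hf.comp_hasFDerivAt z hφ).fun_mul hcot).fun_mul (hasFDerivAt_apply 2 z)).fun_sub
    ((hg.comp_hasFDerivAt z hφ).fun_mul (hasFDerivAt_apply 3 z))
  simp only [Function.comp_apply] at h
  rw [pd, h.fderiv]
  fin_cases i <;> simp <;> ring

theorem J1_eq_cot : J1 = fun w => sin (w 0) * cot (w 1) * w 2 - cos (w 0) * w 3 := by
  funext w
  rw [J1, cot_eq_cos_div_sin, mul_div_assoc]

theorem J2_eq_cot : J2 = fun w => cos (w 0) * cot (w 1) * w 2 - (-sin) (w 0) * w 3 := by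
  funext w
  rw [J2, cot_eq_cos_div_sin, mul_div_assoc, Pi.neg_apply, neg_mul, sub_neg_eq_add]

theorem pd_J1 (hs : sin (z 1) ≠ 0) (i : Fin 4) :
    pd i J1 z = ![J2 z, -(sin (z 0) * z 2) / sin (z 1) ^ 2,
      sin (z 0) * cot (z 1), -cos (z 0)] i := by
  rw [J1_eq_cot, J2_eq_cot, pd_mul_cot_sub_mul (hasDerivAt_sin _) (hasDerivAt_cos _) hs]
  rfl

theorem pd_J2 (hs : sin (z 1) ≠ 0) (i : Fin 4) :
    pd i J2 z = ![-J1 z, -(cos (z 0) * z 2) / sin (z 1) ^ 2,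
      cos (z 0) * cot (z 1), sin (z 0)] i := by
  rw [J2_eq_cot, pd_mul_cot_sub_mul (hasDerivAt_cos _) (hasDerivAt_sin _).neg hs, J1_eq_cot]
  simp [sub_eq_add_neg, add_comm]

theorem pb_J1_J2 (hs : sin (z 1) ≠ 0) : pb J1 J2 z = J3 z := by
  simp only [pb, pd_J1 hs, pd_J2 hs, J1, J2, J3, cot_eq_cos_div_sin, Matrix.cons_val]
  field_simp
  linear_combination z 2 * (cos (z 1) ^ 2 - 1) * sin_sq_add_cos_sq (z 0) +
    z 2 * sin_sq_add_cos_sq (z 1)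

theorem pb_J2_J3 (hs : sin (z 1) ≠ 0) : pb J2 J3 z = J1 z := by
  simp [pb, pd_J2 hs, pd_J3]

theorem pb_J3_J1 (hs : sin (z 1) ≠ 0) : pb J3 J1 z = J2 z := by
  simp [pb, pd_J1 hs, pd_J3]

theorem pb_J1_x1 (hs : sin (z 1) ≠ 0) : pb J1 x1 z = 0 := by
  simp only [pb, pd_J1 hs, pd_x1, Matrix.cons_val]
  linear_combination -(sin (z 0) * cos (z 0)) * sin_mul_cot hs

theorem pb_J1_x3 (hs : sin (z 1) ≠ 0) : pb J1 x3 z = -x2 z := by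
  simp [pb, pd_J1 hs, pd_x3, x2]

theorem pb_J2_x1 (hs : sin (z 1) ≠ 0) : pb J2 x1 z = -x3 z := by
  simp only [pb, pd_J2 hs, pd_x1, x3, Matrix.cons_val]
  linear_combination -cos (z 0) ^ 2 * sin_mul_cot hs - cos (z 1) * sin_sq_add_cos_sq (z 0)

theorem pb_J2_x3 (hs : sin (z 1) ≠ 0) : pb J2 x3 z = x1 z := by
  simp [pb, pd_J2 hs, pd_x3, x1]

theorem pb_J3_x1 : pb J3 x1 z = x2 z := by
  simp [pb, pd_J3, pd_x1, x2]

theorem pb_J3_x3 : pb J3 x3 z = 0 := by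
  simp [pb, pd_J3, pd_x3]

theorem pb_x1_x3 : pb x1 x3 z = 0 := by
  simp [pb, pd_x1, pd_x3]

end SphericalRealization

section Sokolov

/-- The polynomial integral `Ĥ₁` of the Sokolov system. -/
noncomputable def sokolovH1 (a b c : ℝ) (w : Fin 4 → ℝ) : ℝ :=
  J1 w ^ 2 + J2 w ^ 2 + 2 * J3 w ^ 2 + c * J3 w + b * (J3 w * x1 w - x3 w * J1 w) + a / x3 w ^ 2

/-- The factor `2J₃ + c + b x₁` of the second integral `Ĥ₂`. -/
noncomputable def sokolovFactor (b c : ℝ) (w : Fin 4 → ℝ) : ℝ :=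
  2 * J3 w + c + b * x1 w

/-- The function `J₁² + J₂² + J₃² + a/x₃²` under the square root in `Ĥ₂`. -/
noncomputable def sokolovRadicand (a : ℝ) (w : Fin 4 → ℝ) : ℝ :=
  J1 w ^ 2 + J2 w ^ 2 + J3 w ^ 2 + a / x3 w ^ 2

/-- The second integral `Ĥ₂` of the Sokolov system. -/
noncomputable def sokolovH2 (a b c : ℝ) (w : Fin 4 → ℝ) : ℝ :=
  sokolovFactor b c w * √(sokolovRadicand a w)

variable {a b c : ℝ} {F : (Fin 4 → ℝ) → ℝ} {z : Fin 4 → ℝ}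

theorem sokolovH1_eq_sokolovRadicand_add : sokolovH1 a b c = fun w =>
    sokolovRadicand a w + J3 w ^ 2 + c * J3 w + b * (J3 w * x1 w - x3 w * J1 w) := by
  funext w
  rw [sokolovH1, sokolovRadicand]
  ring

theorem sokolovRadicand_nonneg (ha : 0 ≤ a) : 0 ≤ sokolovRadicand a z := by
  unfold sokolovRadicand
  positivity

@[fun_prop]
theorem differentiableAt_sokolovFactor : DifferentiableAt ℝ (sokolovFactor b c) z := by
  unfold sokolovFactor
  fun_prop

@[fun_prop]
theorem differentiableAt_sokolovRadicand (hs : sin (z 1) ≠ 0) (hc : cos (z 1) ≠ 0) :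
    DifferentiableAt ℝ (sokolovRadicand a) z := by
  unfold sokolovRadicand
  have hx3 : x3 z ^ 2 ≠ 0 := pow_ne_zero 2 hc
  fun_prop (disch := assumption)

theorem pb_sokolovFactor : pb F (sokolovFactor b c) z = 2 * pb F J3 z + b * pb F x1 z := by
  unfold sokolovFactor
  simp (disch := fun_prop) only [pb_add, pb_const_mul, pb_const, add_zero]

theorem pb_sokolovRadicand (hs : sin (z 1) ≠ 0) (hc : cos (z 1) ≠ 0) :
    pb F (sokolovRadicand a) z = 2 * (J1 z * pb F J1 z + J2 z * pb F J2 z + J3 z * pb F J3 z)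
      - 2 * a / x3 z ^ 3 * pb F x3 z := by
  have hx3 : x3 z ≠ 0 := hc
  have hx3_sq : x3 z ^ 2 ≠ 0 := pow_ne_zero 2 hx3
  unfold sokolovRadicand
  simp (disch := first | assumption | fun_prop (disch := assumption)) only
    [pb_add, pb_sq, pb_const_div_sq]
  ring

theorem pb_sokolovH1 (hs : sin (z 1) ≠ 0) (hc : cos (z 1) ≠ 0) :
    pb F (sokolovH1 a b c) z = pb F (sokolovRadicand a) z + (2 * J3 z + c) * pb F J3 z
      + b * (J3 z * pb F x1 z + x1 z * pb F J3 z - x3 z * pb F J1 z - J1 z * pb F x3 z) := by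
  rw [sokolovH1_eq_sokolovRadicand_add]
  simp (disch := fun_prop (disch := assumption)) only
    [pb_add, pb_sub, pb_mul, pb_sq, pb_const]
  ring

theorem pb_J1_sokolovRadicand (hs : sin (z 1) ≠ 0) (hc : cos (z 1) ≠ 0) :
    pb J1 (sokolovRadicand a) z = 2 * a / x3 z ^ 3 * x2 z := by
  rw [pb_sokolovRadicand hs hc, pb_self, pb_J1_J2 hs, pb_antisymm J1 J3, pb_J3_J1 hs, pb_J1_x3 hs]
  ring

theorem pb_J3_sokolovRadicand (hs : sin (z 1) ≠ 0) (hc : cos (z 1) ≠ 0) :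
    pb J3 (sokolovRadicand a) z = 0 := by
  rw [pb_sokolovRadicand hs hc, pb_self, pb_J3_J1 hs, pb_antisymm J3 J2, pb_J2_J3 hs, pb_J3_x3]
  ring

theorem pb_x1_sokolovRadicand (hs : sin (z 1) ≠ 0) (hc : cos (z 1) ≠ 0) :
    pb x1 (sokolovRadicand a) z = 2 * (x3 z * J2 z - x2 z * J3 z) := by
  rw [pb_sokolovRadicand hs hc, pb_antisymm x1 J1, pb_antisymm x1 J2, pb_antisymm x1 J3,
    pb_J1_x1 hs, pb_J2_x1 hs, pb_J3_x1, pb_x1_x3]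
  ring

theorem pb_x3_sokolovRadicand (hs : sin (z 1) ≠ 0) (hc : cos (z 1) ≠ 0) :
    pb x3 (sokolovRadicand a) z = 2 * (x2 z * J1 z - x1 z * J2 z) := by
  rw [pb_sokolovRadicand hs hc, pb_self, pb_antisymm x3 J1, pb_antisymm x3 J2, pb_antisymm x3 J3,
    pb_J1_x3 hs, pb_J2_x3 hs, pb_J3_x3]
  ring

theorem pb_J3_sokolovH1 (hs : sin (z 1) ≠ 0) (hc : cos (z 1) ≠ 0) :
    pb J3 (sokolovH1 a b c) z = b * (x2 z * J3 z - x3 z * J2 z) := by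
  rw [pb_sokolovH1 hs hc, pb_J3_sokolovRadicand hs hc, pb_self, pb_J3_J1 hs, pb_J3_x1, pb_J3_x3]
  ring

theorem pb_x1_sokolovH1 (hs : sin (z 1) ≠ 0) (hc : cos (z 1) ≠ 0) :
    pb x1 (sokolovH1 a b c) z =
      2 * (x3 z * J2 z - x2 z * J3 z) - x2 z * sokolovFactor b c z := by
  rw [pb_sokolovH1 hs hc, pb_x1_sokolovRadicand hs hc, pb_self, pb_antisymm x1 J1,
    pb_antisymm x1 J3, pb_J1_x1 hs, pb_J3_x1, pb_x1_x3, sokolovFactor]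
  ring

theorem pb_sokolovH1_sokolovFactor (hs : sin (z 1) ≠ 0) (hc : cos (z 1) ≠ 0) :
    pb (sokolovH1 a b c) (sokolovFactor b c) z = b * x2 z * sokolovFactor b c z := by
  rw [pb_sokolovFactor, pb_antisymm _ J3, pb_antisymm _ x1, pb_J3_sokolovH1 hs hc,
    pb_x1_sokolovH1 hs hc]
  ring

theorem pb_sokolovH1_sokolovRadicand (hs : sin (z 1) ≠ 0) (hc : cos (z 1) ≠ 0) :
    pb (sokolovH1 a b c) (sokolovRadicand a) z = -2 * (b * x2 z) * sokolovRadicand a z := by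
  have hx3 : x3 z ≠ 0 := hc
  rw [pb_antisymm, pb_sokolovH1 hs hc, pb_self, pb_antisymm _ J1, pb_antisymm _ J3,
    pb_antisymm _ x1, pb_antisymm _ x3, pb_J1_sokolovRadicand hs hc, pb_J3_sokolovRadicand hs hc,
    pb_x1_sokolovRadicand hs hc, pb_x3_sokolovRadicand hs hc, sokolovRadicand]
  field_simp
  linear_combination 2 * b * x3 z ^ 2 * J2 z * x_dot_J_eq_zero hs

theorem statement15_general (hs : sin (z 1) ≠ 0) (hc : cos (z 1) ≠ 0)
    (hK : 0 ≤ sokolovRadicand a z) : pb (sokolovH1 a b c) (sokolovH2 a b c) z = 0 :=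
  pb_mul_sqrt_eq_zero differentiableAt_sokolovFactor (differentiableAt_sokolovRadicand hs hc) hK
    (pb_sokolovH1_sokolovFactor hs hc) (pb_sokolovH1_sokolovRadicand hs hc)

end Sokolov

theorem statement15 (a b c : ℝ) (ha : 0 ≤ a) (z : Fin 4 → ℝ)
    (hs : sin (z 1) ≠ 0) (hc : cos (z 1) ≠ 0) :
    pb (fun w => J1 w ^ 2 + J2 w ^ 2 + 2 * J3 w ^ 2 + c * J3 w
        + b * (J3 w * x1 w - x3 w * J1 w) + a / x3 w ^ 2)
      (fun w => (2 * J3 w + c + b * x1 w)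
        * Real.sqrt (J1 w ^ 2 + J2 w ^ 2 + J3 w ^ 2 + a / x3 w ^ 2)) z = 0 :=
  statement15_general hs hc (sokolovRadicand_nonneg ha)
end
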